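/- Let m and δ be positive integers with d = δ mod 2m satisfying d ≤ m, let S = {m, m+δ, 2m+δ}, and let a = (δ − d)/(2m) + 1 (note that 2m divides δ − d). Then for all integers j and r with 0 ≤ j < 2(a−1) and 1 ≤ r ≤ m, v_S(3m + δ + j·m + r) = 3 if j is even and v_S(3m + δ + j·m + r) = 0 if j is odd. (This is the trailing factor (3^m 0^m)^(a−1) of the period, ending at position 3m + 2δ − d.) -/

import Mathlib

/-- The minimum excludant of a finite set of naturals. -/
noncomputable def mex (A : Finset ℕ) : ℕ := sInf {n : ℕ | n ∉ A}

/-- The sink-subtraction nim-value function: `sinkVal S 0 = 0`, and for `x ≥ 1`,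
`sinkVal S x = mex { sinkVal S (x ∸ s) : s ∈ S }` (when every `s ∈ S` is positive,
since `(x+1) - s = x - (s-1)` in truncated subtraction). -/
noncomputable def sinkVal (S : Finset ℕ) : ℕ → ℕ
  | 0 => 0
  | x + 1 => mex (S.image fun s => sinkVal S (x - (s - 1)))
termination_by x => x
decreasing_by omega

/-!
Up to `2 * m + δ` the sink itself is an option, so no position there other than `0` has value `0`.
In the low blocks of length `m`, the two larger moves lead to the sink or into the first block,
where the value is `1`; hence these blocks alternate between the values `1` and `2`. In the block
just above `2 * m + δ` all three options are nonzero, so its value is `0`. From there on,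
subtracting `m` leads to the previous block, while the other two moves lead to two adjacent low
blocks, of values `1` and `2`. The value of a block is therefore the `mex` of `1`, `2` and the value
of the previous block, which alternates between `0` and `3`.
-/

theorem mex_eq_iff {A : Finset ℕ} {n : ℕ} : mex A = n ↔ n ∉ A ∧ ∀ k < n, k ∈ A := by
  have mex_notMem : mex A ∉ A := Nat.sInf_mem (s := {n | n ∉ A}) A.exists_notMem
  have mem_of_lt_mex : ∀ k < mex A, k ∈ A := fun k hk => not_not.1 (Nat.notMem_of_lt_sInf hk)
  constructor
  · rintro rfl
    exact ⟨mex_notMem, mem_of_lt_mex⟩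
  · rintro ⟨hn, hlt⟩
    exact le_antisymm (not_lt.1 fun h => hn (mem_of_lt_mex n h))
      (not_lt.1 fun h => mex_notMem (hlt _ h))

section SinkSubtraction

variable {S : Finset ℕ} {x : ℕ}

theorem sinkVal_zero (S : Finset ℕ) : sinkVal S 0 = 0 := by
  rw [sinkVal]

theorem sinkVal_of_pos (hS : 0 ∉ S) (hx : 0 < x) :
    sinkVal S x = mex (S.image fun s => sinkVal S (x - s)) := by
  obtain ⟨y, rfl⟩ := Nat.exists_eq_add_one.2 hx
  rw [sinkVal]
  congr 1
  refine Finset.image_congr fun s hs => ?_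
  have hs0 : s ≠ 0 := ne_of_mem_of_not_mem hs hS
  simp only [show y - (s - 1) = y + 1 - s by omega]

theorem sinkVal_eq_zero_iff (hS : 0 ∉ S) (hx : 0 < x) :
    sinkVal S x = 0 ↔ ∀ s ∈ S, sinkVal S (x - s) ≠ 0 := by
  simp [sinkVal_of_pos hS hx, mex_eq_iff]

theorem sinkVal_ne_zero_of_le {s : ℕ} (hS : 0 ∉ S) (hs : s ∈ S) (hx : 0 < x) (hxs : x ≤ s) :
    sinkVal S x ≠ 0 := fun h =>
  (sinkVal_eq_zero_iff hS hx).1 h s hs (by rw [Nat.sub_eq_zero_of_le hxs, sinkVal_zero])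

theorem sinkVal_eq_one_of_forall_le (hS : S.Nonempty) (hx : 0 < x) (hxS : ∀ s ∈ S, x ≤ s) :
    sinkVal S x = 1 := by
  have options_eq : (S.image fun s => sinkVal S (x - s)) = {0} := by
    rw [← Finset.image_const hS 0]
    refine Finset.image_congr fun s hs => ?_
    simp only [Nat.sub_eq_zero_of_le (hxS s hs), sinkVal_zero]
  rw [sinkVal_of_pos (fun h => hx.not_ge (hxS 0 h)) hx, options_eq, mex_eq_iff]
  decide

end SinkSubtraction

/-- The additive subtraction set `S(m, δ)`, whose largest element is the sum of the other two. -/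
def additiveSet (m δ : ℕ) : Finset ℕ := {m, m + δ, 2 * m + δ}

namespace additiveSet

variable {m δ x : ℕ}

theorem zero_notMem (hm : 0 < m) : 0 ∉ additiveSet m δ := by
  simp only [additiveSet, Finset.mem_insert, Finset.mem_singleton]
  omega

theorem sinkVal_add (hm : 0 < m) (x : ℕ) :
    sinkVal (additiveSet m δ) (x + m) =
      mex {sinkVal (additiveSet m δ) x, sinkVal (additiveSet m δ) (x - δ),
        sinkVal (additiveSet m δ) (x - (m + δ))} := by
  rw [sinkVal_of_pos (zero_notMem hm) (by omega)]
  simp only [additiveSet, Finset.image_insert, Finset.image_singleton]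
  rw [show x + m - m = x by omega, show x + m - (m + δ) = x - δ by omega,
    show x + m - (2 * m + δ) = x - (m + δ) by omega]

theorem sinkVal_eq_one_of_le (hx : 0 < x) (hxm : x ≤ m) : sinkVal (additiveSet m δ) x = 1 :=
  sinkVal_eq_one_of_forall_le (Finset.insert_nonempty _ _) hx fun s hs => by
    simp only [additiveSet, Finset.mem_insert, Finset.mem_singleton] at hs
    omega

theorem sinkVal_add_eq_one (hm : 0 < m) (hxδ : x ≤ δ)
    (hx : sinkVal (additiveSet m δ) x = 2) : sinkVal (additiveSet m δ) (x + m) = 1 := by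
  rw [sinkVal_add hm, hx, Nat.sub_eq_zero_of_le hxδ, Nat.sub_eq_zero_of_le (by omega),
    sinkVal_zero, mex_eq_iff]
  decide

theorem sinkVal_add_eq_two (hm : 0 < m) (hxδ : x ≤ m + δ)
    (hx : sinkVal (additiveSet m δ) x = 1) : sinkVal (additiveSet m δ) (x + m) = 2 := by
  rw [sinkVal_add hm, hx, Nat.sub_eq_zero_of_le hxδ, sinkVal_zero, mex_eq_iff]
  rcases Nat.eq_zero_or_pos (x - δ) with h | h
  · rw [h, sinkVal_zero]
    decide
  · rw [sinkVal_eq_one_of_le h (by omega)]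
    decide

theorem sinkVal_max_add_eq_zero {r : ℕ} (hr : 0 < r) (hrm : r ≤ m) :
    sinkVal (additiveSet m δ) (2 * m + δ + r) = 0 := by
  have hS : 0 ∉ additiveSet m δ := zero_notMem (hr.trans_le hrm)
  have max_mem : 2 * m + δ ∈ additiveSet m δ := by simp [additiveSet]
  refine (sinkVal_eq_zero_iff hS (by omega)).2 fun s hs => ?_
  simp only [additiveSet, Finset.mem_insert, Finset.mem_singleton] at hs
  exact sinkVal_ne_zero_of_le hS max_mem (by omega) (by omega)

section Blocks

variable {k r : ℕ}

theorem sinkVal_low_block (hk : 2 * k * m ≤ δ) (hr : 0 < r) (hrm : r ≤ m) {q : ℕ}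
    (hq : q ≤ 2 * k + 1) : sinkVal (additiveSet m δ) (q * m + r) = q % 2 + 1 := by
  have hm : 0 < m := hr.trans_le hrm
  induction q with
  | zero => simpa using sinkVal_eq_one_of_le hr hrm
  | succ q ih =>
    specialize ih (by omega)
    rw [show (q + 1) * m + r = q * m + r + m by ring]
    rcases Nat.mod_two_eq_zero_or_one q with heven | hodd
    · have le_add : q * m + r ≤ m + δ := by
        have : q * m ≤ 2 * k * m := by gcongr; omega
        omega
      rw [sinkVal_add_eq_two hm le_add (by rw [ih, heven])]
      omega
    · have le : q * m + r ≤ δ := calc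
        q * m + r ≤ (q + 1) * m := by rw [add_one_mul]; gcongr
        _ ≤ 2 * k * m := by gcongr; omega
        _ ≤ δ := hk
      rw [sinkVal_add_eq_one hm le (by rw [ih, hodd])]
      omega

theorem sinkVal_high_block (hk : 2 * k * m ≤ δ) (hr : 0 < r) (hrm : r ≤ m) {j : ℕ}
    (hj : j ≤ 2 * k) :
    sinkVal (additiveSet m δ) (2 * m + δ + j * m + r) = if Even j then 0 else 3 := by
  induction j with
  | zero => simpa using sinkVal_max_add_eq_zero hr hrm
  | succ j ih =>
    specialize ih (by omega)
    set y := 2 * m + δ + j * m + r with hy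
    have value_sub_δ : sinkVal (additiveSet m δ) (y - δ) = j % 2 + 1 := by
      rw [show y - δ = (j + 2) * m + r by rw [add_mul]; omega,
        sinkVal_low_block hk hr hrm (by omega), Nat.add_mod_right]
    have value_sub_add : sinkVal (additiveSet m δ) (y - (m + δ)) = (j + 1) % 2 + 1 := by
      rw [show y - (m + δ) = (j + 1) * m + r by rw [add_mul]; omega,
        sinkVal_low_block hk hr hrm (by omega)]
    rw [show 2 * m + δ + (j + 1) * m + r = y + m by rw [hy]; ring,
      sinkVal_add (hr.trans_le hrm), ih, value_sub_δ, value_sub_add, mex_eq_iff]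
    rcases Nat.even_or_odd j with heven | hodd
    · rw [if_pos heven, if_neg (Nat.not_even_iff_odd.2 heven.add_one), Nat.even_iff.1 heven,
        Nat.odd_iff.1 heven.add_one]
      decide
    · rw [if_neg (Nat.not_even_iff_odd.2 hodd), if_pos hodd.add_one, Nat.odd_iff.1 hodd,
        Nat.even_iff.1 hodd.add_one]
      decide

end Blocks

end additiveSet

theorem stmt11_general (m δ : ℕ) (S : Finset ℕ) (hS : S = {m, m + δ, 2 * m + δ})
    (d : ℕ) (hd : d = δ % (2 * m)) (a : ℕ) (ha : a = (δ - d) / (2 * m) + 1) :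
    ∀ j r : ℕ, j < 2 * (a - 1) → 1 ≤ r → r ≤ m →
      (Even j → sinkVal S (3 * m + δ + j * m + r) = 3) ∧
      (¬ Even j → sinkVal S (3 * m + δ + j * m + r) = 0) := by
  subst hS hd ha
  intro j r hj hr hrm
  rw [Nat.add_sub_cancel, ← Nat.div_eq_sub_mod_div] at hj
  have hk : 2 * (δ / (2 * m)) * m ≤ δ := by
    rw [mul_right_comm]
    exact Nat.mul_div_le δ (2 * m)
  have value := additiveSet.sinkVal_high_block hk hr hrm (Nat.succ_le_of_lt hj)
  rw [show 2 * m + δ + (j + 1) * m + r = 3 * m + δ + j * m + r by ring] at value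
  constructor <;> intro h <;> simpa [h, parity_simps, additiveSet] using value

theorem stmt11 (m δ : ℕ) (hm : 0 < m) (hδ : 0 < δ)
    (S : Finset ℕ) (hS : S = {m, m + δ, 2 * m + δ})
    (d : ℕ) (hd : d = δ % (2 * m)) (hdm : d ≤ m)
    (a : ℕ) (ha : a = (δ - d) / (2 * m) + 1) :
    ∀ j r : ℕ, j < 2 * (a - 1) → 1 ≤ r → r ≤ m →
      (Even j → sinkVal S (3 * m + δ + j * m + r) = 3) ∧
      (¬ Even j → sinkVal S (3 * m + δ + j * m + r) = 0) :=
  stmt11_general m δ S hS d hd a ha
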